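/- For each P/T Petri net N = (S, A, T), place bisimilarity ~p is an equivalence relation on the set of markings of N (it is reflexive, symmetric, and transitive). -/

import Mathlib

/-- A transition of a P/T net: a triple (pre-set, label, post-set). -/
structure PNTrans (S A : Type) where
  pre : Multiset S
  label : A
  post : Multiset S
deriving DecidableEq

/-- A P/T Petri net over places `S` and labels `A`: a finite set of transitions,
each with a nonempty pre-set. -/
structure PetriNet (S A : Type) [DecidableEq S] [DecidableEq A] where
  T : Finset (PNTrans S A)
  pre_ne : ∀ t ∈ T, t.pre ≠ 0

/-- The additive closure `R⊕` of a place relation `R`: the least relation on markings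
containing `(θ, θ)` and closed under adding `R`-related places on both sides. -/
inductive AddClosure {S : Type} (R : S → S → Prop) : Multiset S → Multiset S → Prop
  | zero : AddClosure R 0 0
  | cons {s1 s2 : S} {m1 m2 : Multiset S} :
      R s1 s2 → AddClosure R m1 m2 → AddClosure R (s1 ::ₘ m1) (s2 ::ₘ m2)

/-- `Fires N m t m'` : transition `t` of `N` is enabled at marking `m` and its firing
produces `m' = (m ⊖ pre(t)) ⊕ post(t)`. -/
def Fires {S A : Type} [DecidableEq S] [DecidableEq A]
    (N : PetriNet S A) (m : Multiset S) (t : PNTrans S A) (m' : Multiset S) : Prop :=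
  t ∈ N.T ∧ t.pre ≤ m ∧ m' = m - t.pre + t.post

/-- A place bisimulation on `N`. -/
def IsPlaceBisim {S A : Type} [DecidableEq S] [DecidableEq A]
    (N : PetriNet S A) (R : S → S → Prop) : Prop :=
  ∀ m1 m2, AddClosure R m1 m2 →
    (∀ t1 m1', Fires N m1 t1 m1' →
      ∃ t2 m2', Fires N m2 t2 m2' ∧ AddClosure R t1.pre t2.pre ∧
        t1.label = t2.label ∧ AddClosure R t1.post t2.post ∧ AddClosure R m1' m2') ∧
    (∀ t2 m2', Fires N m2 t2 m2' →
      ∃ t1 m1', Fires N m1 t1 m1' ∧ AddClosure R t1.pre t2.pre ∧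
        t1.label = t2.label ∧ AddClosure R t1.post t2.post ∧ AddClosure R m1' m2')

/-- Place bisimilarity `m1 ~p m2`. -/
def PlaceBisimilar {S A : Type} [DecidableEq S] [DecidableEq A]
    (N : PetriNet S A) (m1 m2 : Multiset S) : Prop :=
  ∃ R : S → S → Prop, IsPlaceBisim N R ∧ AddClosure R m1 m2

/-- An interleaving bisimulation on the markings of `N`. -/
def IsIntBisim {S A : Type} [DecidableEq S] [DecidableEq A]
    (N : PetriNet S A) (Q : Multiset S → Multiset S → Prop) : Prop :=
  ∀ m1 m2, Q m1 m2 →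
    (∀ t1 m1', Fires N m1 t1 m1' →
      ∃ t2 m2', Fires N m2 t2 m2' ∧ t1.label = t2.label ∧ Q m1' m2') ∧
    (∀ t2 m2', Fires N m2 t2 m2' →
      ∃ t1 m1', Fires N m1 t1 m1' ∧ t1.label = t2.label ∧ Q m1' m2')

/-- Interleaving bisimilarity `m1 ~int m2`. -/
def IntBisimilar {S A : Type} [DecidableEq S] [DecidableEq A]
    (N : PetriNet S A) (m1 m2 : Multiset S) : Prop :=
  ∃ Q, IsIntBisim N Q ∧ Q m1 m2

/-- First projection of a linking. -/
def lproj1 {S : Type} (l : Multiset (S × S)) : Multiset S := l.map Prod.fst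

/-- Second projection of a linking. -/
def lproj2 {S : Type} (l : Multiset (S × S)) : Multiset S := l.map Prod.snd

/-- A structure-preserving bisimulation on `N`: a set of linkings. -/
def IsSpBisim {S A : Type} [DecidableEq S] [DecidableEq A]
    (N : PetriNet S A) (R : Set (Multiset (S × S))) : Prop :=
  ∀ l ∈ R, ∀ c ≤ l,
    (∀ t1 ∈ N.T, t1.pre = lproj1 c →
      ∃ t2 ∈ N.T, t1.label = t2.label ∧ t2.pre = lproj2 c ∧
        ∃ cb : Multiset (S × S), t1.post = lproj1 cb ∧ t2.post = lproj2 cb ∧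
          l - c + cb ∈ R) ∧
    (∀ t2 ∈ N.T, t2.pre = lproj2 c →
      ∃ t1 ∈ N.T, t1.label = t2.label ∧ t1.pre = lproj1 c ∧
        ∃ cb : Multiset (S × S), t1.post = lproj1 cb ∧ t2.post = lproj2 cb ∧
          l - c + cb ∈ R)

/-- Structure-preserving bisimilarity `m1 ~sp m2`. -/
def SpBisimilar {S A : Type} [DecidableEq S] [DecidableEq A]
    (N : PetriNet S A) (m1 m2 : Multiset S) : Prop :=
  ∃ (R : Set (Multiset (S × S))) (l : Multiset (S × S)),
    IsSpBisim N R ∧ l ∈ R ∧ lproj1 l = m1 ∧ lproj2 l = m2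

/-!
The additive closure preserves identities, converses and composition of place relations.
Hence place bisimulations, whose transfer conditions are phrased through additive closures, inherit
closure under these three operations, and place bisimilarity is an equivalence.
-/

open Relation

theorem multisetRel_comp {α β γ : Type*} (r : α → β → Prop) (p : β → γ → Prop) :
    Multiset.Rel (Comp r p) = Comp (Multiset.Rel r) (Multiset.Rel p) := by
  ext s u
  constructor
  · intro h
    induction h with
    | zero => exact ⟨0, .zero, .zero⟩
    | cons hac _ ih =>
      obtain ⟨b, hab, hbc⟩ := hac
      obtain ⟨t, hst, htu⟩ := ih
      exact ⟨b ::ₘ t, .cons hab hst, .cons hbc htu⟩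
  · rintro ⟨t, hst, htu⟩
    induction hst generalizing u with
    | zero =>
      obtain rfl := Multiset.rel_zero_left.mp htu
      exact .zero
    | cons hab _ ih =>
      obtain ⟨c, v, hbc, htv, rfl⟩ := Multiset.rel_cons_left.mp htu
      exact .cons ⟨_, hab, hbc⟩ (ih v htv)

section AddClosure

variable {S : Type}

theorem addClosure_eq_multisetRel (R : S → S → Prop) : AddClosure R = Multiset.Rel R := by
  ext m₁ m₂
  constructor <;> intro h <;> induction h with
  | zero => exact .zero
  | cons hs _ ih => exact .cons hs ih

theorem addClosure_eq : AddClosure (Eq : S → S → Prop) = Eq := by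
  ext m₁ m₂
  rw [addClosure_eq_multisetRel, Multiset.rel_eq]

theorem addClosure_flip (R : S → S → Prop) : AddClosure (flip R) = flip (AddClosure R) := by
  ext m₁ m₂
  simp only [addClosure_eq_multisetRel, Multiset.rel_flip, flip]

theorem addClosure_comp (R Q : S → S → Prop) :
    AddClosure (Comp R Q) = Comp (AddClosure R) (AddClosure Q) := by
  simp only [addClosure_eq_multisetRel, multisetRel_comp]

end AddClosure

section PlaceBisimulation

variable {S A : Type} [DecidableEq S] [DecidableEq A] {N : PetriNet S A} {R Q : S → S → Prop}
  {m₁ m₂ m₃ : Multiset S}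

/-- A place simulation: the forward half of the transfer condition of a place bisimulation. The
backward half is the same condition on the converse relation, see `isPlaceBisim_iff`. -/
def IsPlaceSim (N : PetriNet S A) (R : S → S → Prop) : Prop :=
  ∀ m₁ m₂, AddClosure R m₁ m₂ → ∀ t₁ m₁', Fires N m₁ t₁ m₁' →
    ∃ t₂ m₂', Fires N m₂ t₂ m₂' ∧ AddClosure R t₁.pre t₂.pre ∧
      t₁.label = t₂.label ∧ AddClosure R t₁.post t₂.post ∧ AddClosure R m₁' m₂'

theorem isPlaceBisim_iff : IsPlaceBisim N R ↔ IsPlaceSim N R ∧ IsPlaceSim N (flip R) := by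
  simp only [IsPlaceBisim, IsPlaceSim, addClosure_flip, flip]
  constructor
  · refine fun h ↦ ⟨fun m₁ m₂ hm ↦ (h m₁ m₂ hm).1, fun m₂ m₁ hm ↦ ?_⟩
    simpa only [eq_comm] using (h m₁ m₂ hm).2
  · refine fun ⟨hR, hRflip⟩ m₁ m₂ hm ↦ ⟨hR m₁ m₂ hm, ?_⟩
    simpa only [eq_comm] using hRflip m₂ m₁ hm

theorem isPlaceSim_eq (N : PetriNet S A) : IsPlaceSim N Eq := by
  simp only [IsPlaceSim, addClosure_eq]
  rintro m _ rfl t m' ht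
  exact ⟨t, m', ht, rfl, rfl, rfl, rfl⟩

theorem IsPlaceSim.comp (hR : IsPlaceSim N R) (hQ : IsPlaceSim N Q) : IsPlaceSim N (Comp R Q) := by
  simp only [IsPlaceSim, addClosure_comp]
  rintro m₁ m₃ ⟨m₂, hm₁₂, hm₂₃⟩ t₁ m₁' ht₁
  obtain ⟨t₂, m₂', ht₂, hpre₁₂, hlabel₁₂, hpost₁₂, hm₁₂'⟩ := hR m₁ m₂ hm₁₂ t₁ m₁' ht₁
  obtain ⟨t₃, m₃', ht₃, hpre₂₃, hlabel₂₃, hpost₂₃, hm₂₃'⟩ := hQ m₂ m₃ hm₂₃ t₂ m₂' ht₂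
  exact ⟨t₃, m₃', ht₃, ⟨t₂.pre, hpre₁₂, hpre₂₃⟩, hlabel₁₂.trans hlabel₂₃,
    ⟨t₂.post, hpost₁₂, hpost₂₃⟩, ⟨m₂', hm₁₂', hm₂₃'⟩⟩

theorem isPlaceBisim_eq (N : PetriNet S A) : IsPlaceBisim N Eq := by
  rw [isPlaceBisim_iff, Std.Symm.flip_eq]
  exact ⟨isPlaceSim_eq N, isPlaceSim_eq N⟩

theorem IsPlaceBisim.flip (hR : IsPlaceBisim N R) : IsPlaceBisim N (flip R) :=
  isPlaceBisim_iff.mpr (isPlaceBisim_iff.mp hR).symm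

theorem IsPlaceBisim.comp (hR : IsPlaceBisim N R) (hQ : IsPlaceBisim N Q) :
    IsPlaceBisim N (Comp R Q) := by
  rw [isPlaceBisim_iff] at hR hQ ⊢
  rw [flip_comp]
  exact ⟨hR.1.comp hQ.1, hQ.2.comp hR.2⟩

theorem PlaceBisimilar.refl (N : PetriNet S A) (m : Multiset S) : PlaceBisimilar N m m :=
  ⟨Eq, isPlaceBisim_eq N, by rw [addClosure_eq]⟩

theorem PlaceBisimilar.symm : PlaceBisimilar N m₁ m₂ → PlaceBisimilar N m₂ m₁
  | ⟨R, hR, hm⟩ => ⟨flip R, hR.flip, by rwa [addClosure_flip]⟩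

theorem PlaceBisimilar.trans : PlaceBisimilar N m₁ m₂ → PlaceBisimilar N m₂ m₃ →
    PlaceBisimilar N m₁ m₃
  | ⟨R, hR, hm₁₂⟩, ⟨Q, hQ, hm₂₃⟩ =>
    ⟨Comp R Q, hR.comp hQ, by rw [addClosure_comp]; exact ⟨m₂, hm₁₂, hm₂₃⟩⟩

end PlaceBisimulation

theorem placeBisimilar_equivalence_general {S A : Type} [DecidableEq S] [DecidableEq A]
    (N : PetriNet S A) : Equivalence (PlaceBisimilar N) :=
  ⟨PlaceBisimilar.refl N, PlaceBisimilar.symm, PlaceBisimilar.trans⟩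

/-- place bisimilarity is an equivalence relation on markings. -/
theorem placeBisimilar_equivalence {S A : Type} [Fintype S] [Fintype A]
    [DecidableEq S] [DecidableEq A] (N : PetriNet S A) :
    Equivalence (PlaceBisimilar N) :=
  placeBisimilar_equivalence_general N
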